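/- arXiv:1903.08160 — 2 statements merged into one kernel-verified Lean document; each statement's English description precedes it below -/
import Mathlib

section
/- For a Tychonoff space X, the following are equivalent: (1) the bitopological function space (C(X), τ_k, τ_p) satisfies S_fin(Ω^k_0, Ω^p_0), i.e., for every sequence (A_n) of subsets of C(X) each having the constant zero function 0 in its closure in C_k(X) but with 0 ∉ A_n, one can choose finite B_n ⊆ A_n such that 0 lies in the closure of ⋃_n B_n in C_p(X); (2) X satisfies S_fin(𝒦, Ω), i.e., for every sequence (𝒰_n) of open k-covers of X one can choose finite 𝒱_n ⊆ 𝒰_n such that ⋃_n 𝒱_n is an ω-cover of X. -/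
open Set Filter Topology TopologicalSpace

universe u

/-- The topology of pointwise convergence on `C(X, ℝ)`. -/
def pointwiseTopology (X : Type u) [TopologicalSpace X] : TopologicalSpace C(X, ℝ) :=
  TopologicalSpace.induced (fun f : C(X, ℝ) => (f : X → ℝ)) Pi.topologicalSpace

/-- `𝒰` is an (open) k-cover of `X`: a nontrivial open cover such that every compact
subset of `X` is contained in some member of `𝒰`. -/
def IsKCover {X : Type u} [TopologicalSpace X] (𝒰 : Set (Set X)) : Prop :=
  (∀ U ∈ 𝒰, IsOpen U) ∧ ⋃₀ 𝒰 = Set.univ ∧ Set.univ ∉ 𝒰 ∧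
    ∀ K : Set X, IsCompact K → ∃ U ∈ 𝒰, K ⊆ U

/-- `𝒰` is an (open) ω-cover of `X`: a nontrivial open cover such that every finite
subset of `X` is contained in some member of `𝒰`. -/
def IsOmegaCover {X : Type u} [TopologicalSpace X] (𝒰 : Set (Set X)) : Prop :=
  (∀ U ∈ 𝒰, IsOpen U) ∧ ⋃₀ 𝒰 = Set.univ ∧ Set.univ ∉ 𝒰 ∧
    ∀ F : Set X, F.Finite → ∃ U ∈ 𝒰, F ⊆ U

/-- `𝒰` is an (open) γ-cover of `X`: an infinite open cover such that for every finite
subset `F` of `X`, all but finitely many members of `𝒰` contain `F`. -/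
def IsGammaCover {X : Type u} [TopologicalSpace X] (𝒰 : Set (Set X)) : Prop :=
  (∀ U ∈ 𝒰, IsOpen U) ∧ ⋃₀ 𝒰 = Set.univ ∧ 𝒰.Infinite ∧
    ∀ F : Set X, F.Finite → {U ∈ 𝒰 | ¬ F ⊆ U}.Finite

/-- `iw(X) = ℵ₀`: there is a second-countable Tychonoff space `Y` and a continuous
bijection (one-to-one and onto map) from `X` to `Y`. -/
def CountableIWeight (X : Type u) [TopologicalSpace X] : Prop :=
  ∃ (Y : Type u) (_ : TopologicalSpace Y), SecondCountableTopology Y ∧ T35Space Y ∧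
    ∃ f : X → Y, Continuous f ∧ Function.Bijective f

/-- The selection principle `S₁(𝒜, ℬ)`. -/
def S1sel {α : Type u} (𝒜 ℬ : Set (Set α)) : Prop :=
  ∀ A : ℕ → Set α, (∀ n, A n ∈ 𝒜) →
    ∃ b : ℕ → α, (∀ n, b n ∈ A n) ∧ Set.range b ∈ ℬ

/-- The selection principle `S_fin(𝒜, ℬ)`. -/
def SfinSel {α : Type u} (𝒜 ℬ : Set (Set α)) : Prop :=
  ∀ A : ℕ → Set α, (∀ n, A n ∈ 𝒜) →
    ∃ B : ℕ → Set α, (∀ n, (B n).Finite ∧ B n ⊆ A n) ∧ (⋃ n, B n) ∈ ℬ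

/-- A strategy for player ONE in the game `G₁(𝒜, ℬ)` (a function from finite sequences
of TWO's moves to sets) is winning if it always plays members of `𝒜` and ONE wins every
play in which he follows it. -/
def IsWinningStrategyOneG1 {α : Type u} (𝒜 ℬ : Set (Set α)) (σ : List α → Set α) : Prop :=
  (∀ h : List α, σ h ∈ 𝒜) ∧
    ∀ b : ℕ → α, (∀ n, b n ∈ σ (List.ofFn fun i : Fin n => b i)) → Set.range b ∉ ℬ

/-- A strategy for player ONE in the game `G_fin(𝒜, ℬ)` (a function from finite sequences
of TWO's moves, which are finite subsets, to sets) is winning if it always plays members of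
`𝒜` and ONE wins every play in which he follows it. -/
def IsWinningStrategyOneGfin {α : Type u} (𝒜 ℬ : Set (Set α)) (σ : List (Set α) → Set α) :
    Prop :=
  (∀ h : List (Set α), σ h ∈ 𝒜) ∧
    ∀ B : ℕ → Set α,
      (∀ n, (B n).Finite ∧ B n ⊆ σ (List.ofFn fun i : Fin n => B i)) → (⋃ n, B n) ∉ ℬ

/-- `A ⊆ C(X, ℝ)` is sequentially dense in `C_p(X)`: every continuous function is the
pointwise limit of a sequence from `A`. -/
def SeqDenseP (X : Type u) [TopologicalSpace X] (A : Set C(X, ℝ)) : Prop :=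
  ∀ g : C(X, ℝ), ∃ s : ℕ → C(X, ℝ), (∀ n, s n ∈ A) ∧
    Filter.Tendsto s Filter.atTop (@nhds _ (pointwiseTopology X) g)

/-- The family `Ω^k_0` of subsets of `C(X, ℝ)` not containing `0` but having `0` in their
closure with respect to the compact-open topology. -/
def OmegaKZero (X : Type u) [TopologicalSpace X] (A : Set C(X, ℝ)) : Prop :=
  (0 : C(X, ℝ)) ∉ A ∧ (0 : C(X, ℝ)) ∈ closure A

/-- The family `Ω^p_0` of subsets of `C(X, ℝ)` not containing `0` but having `0` in their
closure with respect to the topology of pointwise convergence. -/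
def OmegaPZero (X : Type u) [TopologicalSpace X] (A : Set C(X, ℝ)) : Prop :=
  (0 : C(X, ℝ)) ∉ A ∧ (0 : C(X, ℝ)) ∈ @closure _ (pointwiseTopology X) A

/-- The family `Γ^p_0` of infinite subsets `A` of `C(X, ℝ)` with `0 ∉ A` such that every
neighborhood of `0` in the topology of pointwise convergence contains all but finitely
many elements of `A`. -/
def GammaPZero (X : Type u) [TopologicalSpace X] (A : Set C(X, ℝ)) : Prop :=
  A.Infinite ∧ (0 : C(X, ℝ)) ∉ A ∧
    ∀ N ∈ @nhds _ (pointwiseTopology X) (0 : C(X, ℝ)), {f ∈ A | f ∉ N}.Finite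

/-- In a Tychonoff space, a compact set and the complement of an open neighborhood of it are
separated by a continuous real-valued function. -/
theorem exists_continuousMap_eqOn_zero_one_of_isCompact {X : Type u} [TopologicalSpace X]
    [T35Space X] {K U : Set X} (hK : IsCompact K) (hU : IsOpen U) (hKU : K ⊆ U) :
    ∃ f : C(X, ℝ), EqOn f 0 K ∧ EqOn f 1 Uᶜ := by
  obtain ⟨V, hV, rfl⟩ := (isInducing_stoneCechUnit (X := X)).isOpen_iff.1 hU
  obtain ⟨g, hg0, hg1, -⟩ := exists_continuous_zero_one_of_isClosed
    (hK.image continuous_stoneCechUnit).isClosed hV.isClosed_compl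
    (disjoint_compl_right_iff_subset.2 (image_subset_iff.2 hKU))
  exact ⟨g.comp ⟨stoneCechUnit, continuous_stoneCechUnit⟩,
    fun x hx => hg0 (mem_image_of_mem _ hx), fun x hx => hg1 hx⟩

theorem zero_mem_closure_compactOpen_iff {X : Type u} [TopologicalSpace X] {A : Set C(X, ℝ)} :
    (0 : C(X, ℝ)) ∈ closure A ↔
      ∀ K : Set X, IsCompact K → ∀ ε > 0, ∃ f ∈ A, ∀ x ∈ K, |f x| < ε := by
  have hb : (𝓝 (0 : C(X, ℝ))).HasBasis _ _ :=
    (Metric.nhds_basis_ball (x := (0 : ℝ))).nhds_continuousMapConst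
  rw [mem_closure_iff_nhds_basis hb]
  simp only [MapsTo, Prod.forall, mem_ofPred_eq, mem_ball_zero_iff, Real.norm_eq_abs]
  exact ⟨fun h K hK ε hε => h K ε ⟨hK, hε⟩, fun h K ε hK => h K hK.1 ε hK.2⟩

theorem zero_mem_closure_pointwise_iff {X : Type u} [TopologicalSpace X] {A : Set C(X, ℝ)} :
    (0 : C(X, ℝ)) ∈ @closure _ (pointwiseTopology X) A ↔
      ∀ F : Set X, F.Finite → ∀ ε > 0, ∃ f ∈ A, ∀ x ∈ F, |f x| < ε := by
  rw [pointwiseTopology, closure_induced, mem_closure_iff_nhds]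
  constructor
  · intro h F hF ε hε
    obtain ⟨_, hg, f, hf, rfl⟩ := h (F.pi fun _ => Metric.ball 0 ε)
      (set_pi_mem_nhds hF fun x _ => by simpa using Metric.ball_mem_nhds (0 : ℝ) hε)
    exact ⟨f, hf, fun x hx => by simpa using hg x hx⟩
  · intro h N hN
    rw [nhds_pi, Filter.mem_pi] at hN
    obtain ⟨F, hF, t, ht, htN⟩ := hN
    have hev : ∀ᶠ ε in 𝓝[>] (0 : ℝ), ∀ x ∈ F, Metric.ball 0 ε ⊆ t x := by
      rw [hF.eventually_all]
      intro x _
      obtain ⟨δ, hδ, hδt⟩ := Metric.mem_nhds_iff.1 (ht x)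
      filter_upwards [Ioo_mem_nhdsGT hδ] with ε hε
      exact (Metric.ball_subset_ball hε.2.le).trans hδt
    obtain ⟨ε, hεt, hε⟩ := (hev.and self_mem_nhdsWithin).exists
    obtain ⟨f, hf, hfF⟩ := h F hF ε hε
    exact ⟨f, htN fun x hx => hεt x hx (by simpa using hfF x hx), f, hf, rfl⟩

theorem sfinSel_isKCover_isOmegaCover_of_closure {X : Type u} [TopologicalSpace X] [T35Space X]
    (h : SfinSel {A : Set C(X, ℝ) | OmegaKZero X A}
      {A : Set C(X, ℝ) | (0 : C(X, ℝ)) ∈ @closure _ (pointwiseTopology X) A}) :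
    SfinSel {𝒰 : Set (Set X) | IsKCover 𝒰} {𝒰 : Set (Set X) | IsOmegaCover 𝒰} := by
  intro 𝒰 h𝒰
  obtain ⟨B, hB, hB0⟩ := h (fun n => {f | ∃ U ∈ 𝒰 n, EqOn f 1 Uᶜ}) fun n => by
    obtain ⟨ho, -, hne, hk⟩ := h𝒰 n
    refine ⟨?_, zero_mem_closure_compactOpen_iff.2 fun K hK ε hε => ?_⟩
    · rintro ⟨U, hU, hU1⟩
      obtain ⟨x, hx⟩ := (ne_univ_iff_exists_notMem U).1 fun he => hne (he ▸ hU)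
      simpa using hU1 hx
    · obtain ⟨U, hU, hKU⟩ := hk K hK
      obtain ⟨f, hf0, hf1⟩ := exists_continuousMap_eqOn_zero_one_of_isCompact hK (ho U hU) hKU
      exact ⟨f, ⟨U, hU, hf1⟩, fun x hx => by simpa [hf0 hx] using hε⟩
  choose hfin hsub using hB
  choose! V hV hV1 using fun n (f : C(X, ℝ)) (hf : f ∈ B n) => hsub n hf
  rw [mem_ofPred_eq, zero_mem_closure_pointwise_iff] at hB0
  have hmem : ∀ U ∈ ⋃ n, V n '' B n, ∃ n, U ∈ 𝒰 n := by
    intro U hU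
    obtain ⟨n, f, hf, rfl⟩ := mem_iUnion.1 hU
    exact ⟨n, hV n f hf⟩
  have homega : ∀ F : Set X, F.Finite → ∃ U ∈ ⋃ n, V n '' B n, F ⊆ U := by
    intro F hF
    obtain ⟨f, hf, hfF⟩ := hB0 F hF 1 one_pos
    obtain ⟨n, hn⟩ := mem_iUnion.1 hf
    refine ⟨V n f, mem_iUnion.2 ⟨n, f, hn, rfl⟩, fun x hx => ?_⟩
    by_contra hxV
    have hlt := hfF x hx
    rw [hV1 n f hn hxV] at hlt
    simp at hlt
  refine ⟨fun n => V n '' B n, fun n => ⟨(hfin n).image _, image_subset_iff.2 (hV n)⟩,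
    ?_, ?_, ?_, homega⟩
  · intro U hU
    obtain ⟨n, hn⟩ := hmem U hU
    exact (h𝒰 n).1 U hn
  · refine eq_univ_of_forall fun x => ?_
    obtain ⟨U, hU, hxU⟩ := homega {x} (finite_singleton x)
    exact ⟨U, hU, hxU rfl⟩
  · intro hU
    obtain ⟨n, hn⟩ := hmem _ hU
    exact (h𝒰 n).2.2.1 hn

theorem sfinSel_closure_of_isKCover_isOmegaCover {X : Type u} [TopologicalSpace X]
    (h : SfinSel {𝒰 : Set (Set X) | IsKCover 𝒰} {𝒰 : Set (Set X) | IsOmegaCover 𝒰}) :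
    SfinSel {A : Set C(X, ℝ) | OmegaKZero X A}
      {A : Set C(X, ℝ) | (0 : C(X, ℝ)) ∈ @closure _ (pointwiseTopology X) A} := by
  intro A hA
  let r : ℕ → ℝ := fun n => 1 / ((n : ℝ) + 1)
  have hr : ∀ n, 0 < r n := fun n => Nat.one_div_pos_of_nat
  have hr0 : Tendsto r atTop (𝓝 0) := tendsto_one_div_add_atTop_nhds_zero_nat
  by_cases hcase : ∃ᶠ n in atTop, ∃ f ∈ A n, ∀ x, |f x| < r n
  · choose! g hgA hg using fun n (hn : ∃ f ∈ A n, ∀ x, |f x| < r n) => hn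
    refine ⟨fun n => {f | f = g n ∧ ∃ f ∈ A n, ∀ x, |f x| < r n}, fun n =>
      ⟨(finite_singleton (g n)).subset fun f hf => hf.1, ?_⟩, ?_⟩
    · rintro f ⟨rfl, hn⟩
      exact hgA n hn
    · refine zero_mem_closure_pointwise_iff.2 fun F _ ε hε => ?_
      obtain ⟨n, hn, hnε⟩ := (hcase.and_eventually (hr0.eventually_lt_const hε)).exists
      exact ⟨g n, mem_iUnion.2 ⟨n, rfl, hn⟩, fun x _ => (hg n hn x).trans hnε⟩
  · obtain ⟨N, hN⟩ := eventually_atTop.1 (not_frequently.1 hcase)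
    let U : ℕ → C(X, ℝ) → Set X := fun n f => {x | |f x| < r n}
    obtain ⟨𝒱, h𝒱, -, -, hne, homega⟩ := h (fun n => U (n + N) '' A (n + N)) fun n => by
      have hk : ∀ K : Set X, IsCompact K → ∃ V ∈ U (n + N) '' A (n + N), K ⊆ V := by
        intro K hK
        obtain ⟨f, hf, hfK⟩ :=
          zero_mem_closure_compactOpen_iff.1 (hA (n + N)).2 K hK _ (hr (n + N))
        exact ⟨_, mem_image_of_mem _ hf, hfK⟩
      refine ⟨?_, ?_, ?_, hk⟩
      · rintro _ ⟨f, -, rfl⟩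
        exact isOpen_lt (by fun_prop) continuous_const
      · refine eq_univ_of_forall fun x => ?_
        obtain ⟨V, hV, hxV⟩ := hk {x} isCompact_singleton
        exact ⟨V, hV, hxV rfl⟩
      · rintro ⟨f, hf, hfU⟩
        exact hN (n + N) (Nat.le_add_left _ _) ⟨f, hf, eq_univ_iff_forall.1 hfU⟩
    choose h𝒱fin h𝒱sub using h𝒱
    choose! g hgA hg using fun n (V : Set X) (hV : V ∈ 𝒱 n) => h𝒱sub n hV
    refine ⟨fun n => {f | N ≤ n ∧ f ∈ g (n - N) '' 𝒱 (n - N)}, fun n =>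
      ⟨((h𝒱fin (n - N)).image _).subset fun f hf => hf.2, ?_⟩, ?_⟩
    · rintro _ ⟨hn, V, hV, rfl⟩
      simpa [Nat.sub_add_cancel hn] using hgA (n - N) V hV
    · refine zero_mem_closure_pointwise_iff.2 fun F hF ε hε => ?_
      obtain ⟨M, hM⟩ := eventually_atTop.1 (hr0.eventually_lt_const hε)
      have hproper : ∀ V ∈ ⋃ n, 𝒱 n, ∃ x, x ∉ V := fun V hV =>
        (ne_univ_iff_exists_notMem V).1 fun he => hne (he ▸ hV)
      have : Nonempty X := by
        obtain ⟨V, hV, -⟩ := homega ∅ finite_empty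
        exact (hproper V hV).nonempty
      have hfin : (⋃ n ∈ Iio M, 𝒱 n).Finite := (finite_Iio M).biUnion fun n _ => h𝒱fin n
      have hout : ∀ V ∈ ⋃ n ∈ Iio M, 𝒱 n, ∃ x, x ∉ V := by
        intro V hV
        obtain ⟨n, -, hn⟩ := mem_iUnion₂.1 hV
        exact hproper V (mem_iUnion.2 ⟨n, hn⟩)
      choose! p hp using hout
      obtain ⟨V, hV, hFV⟩ := homega (F ∪ p '' ⋃ n ∈ Iio M, 𝒱 n) (hF.union (hfin.image p))
      obtain ⟨n, hn⟩ := mem_iUnion.1 hV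
      have hMn : M ≤ n := by
        by_contra hlt
        have hmem : V ∈ ⋃ n ∈ Iio M, 𝒱 n := mem_biUnion (not_le.1 hlt) hn
        exact hp V hmem (hFV (Or.inr (mem_image_of_mem p hmem)))
      refine ⟨g n V, mem_iUnion.2 ⟨n + N, Nat.le_add_left _ _, ?_⟩, fun x hx => ?_⟩
      · simpa using mem_image_of_mem (g n) hn
      · have hxU : x ∈ U (n + N) (g n V) := by
          rw [hg n V hn]
          exact hFV (Or.inl hx)
        exact lt_trans hxU (hM (n + N) (hMn.trans (Nat.le_add_right _ _)))

theorem statement1 (X : Type u) [TopologicalSpace X] [T35Space X] :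
    SfinSel {A : Set C(X, ℝ) | OmegaKZero X A}
      {A : Set C(X, ℝ) | (0 : C(X, ℝ)) ∈ @closure _ (pointwiseTopology X) A} ↔
    SfinSel {𝒰 : Set (Set X) | IsKCover 𝒰} {𝒰 : Set (Set X) | IsOmegaCover 𝒰} :=
  ⟨sfinSel_isKCover_isOmegaCover_of_closure, sfinSel_closure_of_isKCover_isOmegaCover⟩
end

section
/- Let X be a Tychonoff space with iw(X) = ℵ₀. If the bitopological function space (C(X), τ_k, τ_p) satisfies S₁(𝒟^k, Γ^p_0) — i.e., for every sequence (D_n) of dense subsets of C_k(X) one can choose f_n ∈ D_n such that the set {f_n : n ∈ ℕ} is infinite, does not contain the constant zero function 0, and every neighborhood of 0 in C_p(X) contains all but finitely many of its elements — then X satisfies S₁(𝒦, Γ): for every sequence (𝒰_n) of open k-covers of X one can choose U_n ∈ 𝒰_n such that {U_n : n ∈ ℕ} is a γ-cover of X. -/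
open Set Filter Topology TopologicalSpace

universe u

/-- In a completely regular space, a compact set and the complement of an open neighbourhood of it
are separated by a continuous function into `[0, 1]`. -/
theorem exists_continuous_zero_one_of_isCompact_of_completelyRegular {X : Type u}
    [TopologicalSpace X] [CompletelyRegularSpace X] {K U : Set X} (hK : IsCompact K)
    (hU : IsOpen U) (hKU : K ⊆ U) :
    ∃ φ : C(X, ℝ), EqOn φ 0 K ∧ EqOn φ 1 Uᶜ ∧ ∀ x, φ x ∈ Icc (0 : ℝ) 1 := by
  obtain ⟨V, hV, rfl⟩ := isInducing_stoneCechUnit.isOpen_iff.1 hU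
  have hdisj : Disjoint (stoneCechUnit '' K) Vᶜ :=
    disjoint_compl_right_iff_subset.2 (image_subset_iff.2 hKU)
  obtain ⟨φ, h0, h1, hφ⟩ := exists_continuous_zero_one_of_isClosed
    (hK.image continuous_stoneCechUnit).isClosed hV.isClosed_compl hdisj
  exact ⟨φ.comp ⟨stoneCechUnit, continuous_stoneCechUnit⟩,
    fun x hx => h0 (mem_image_of_mem _ hx), fun x hx => h1 hx, fun x => hφ _⟩

/-- A set of continuous functions is dense in the compact-open topology if every continuous
function agrees on every compact set with a member of it. -/
theorem ContinuousMap.dense_of_forall_exists_eqOn {X Y : Type*} [TopologicalSpace X]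
    [TopologicalSpace Y] {D : Set C(X, Y)}
    (hD : ∀ (g : C(X, Y)) (K : Set X), IsCompact K → ∃ f ∈ D, EqOn f g K) : Dense D := by
  intro g
  rw [mem_closure_iff_nhds_basis g.hasBasis_nhds]
  rintro S ⟨hSfin, hS⟩
  obtain ⟨f, hf, hfg⟩ := hD g (⋃ p ∈ S, p.1)
    (hSfin.isCompact_biUnion fun p hp => (hS p.1 p.2 hp).1)
  refine ⟨f, hf, mem_iInter₂.2 fun p hp x hx => ?_⟩
  rw [hfg (mem_biUnion hp hx)]
  exact (hS p.1 p.2 hp).2.2 hx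

/-- The bounded continuous functions equal to `c` off some member of a k-cover are dense in the
compact-open topology. -/
theorem IsKCover.dense_bounded_eqOn_compl {X : Type u} [TopologicalSpace X]
    [CompletelyRegularSpace X] {𝒰 : Set (Set X)} (h𝒰 : IsKCover 𝒰) (c : ℝ) :
    Dense {f : C(X, ℝ) | (∃ M, ∀ x, f x ≤ M) ∧ ∃ U ∈ 𝒰, ∀ x ∉ U, f x = c} := by
  refine ContinuousMap.dense_of_forall_exists_eqOn fun g K hK => ?_
  obtain ⟨U, hU, hKU⟩ := h𝒰.2.2.2 K hK
  obtain ⟨φ, h0, h1, hφ⟩ := exists_continuous_zero_one_of_isCompact_of_completelyRegular hK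
    (h𝒰.1 U hU) hKU
  obtain ⟨M, hM⟩ := (hK.image g.continuous).bddAbove
  have hgM : ∀ x ∈ K, g x ≤ M := fun x hx => hM (mem_image_of_mem g hx)
  refine ⟨(1 - φ) * (g ⊓ ContinuousMap.const X M) + φ * ContinuousMap.const X c,
    ⟨⟨max M c, fun x => ?_⟩, U, hU, fun x hx => ?_⟩, fun x hx => ?_⟩
  · obtain ⟨hx0, hx1⟩ := hφ x
    have hgx : min (g x) M ≤ max M c := (min_le_right _ _).trans (le_max_left _ _)
    have hc : c ≤ max M c := le_max_right _ _
    simp only [ContinuousMap.add_apply, ContinuousMap.mul_apply, ContinuousMap.sub_apply,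
      ContinuousMap.one_apply, ContinuousMap.inf_apply, ContinuousMap.const_apply]
    nlinarith [mul_le_mul_of_nonneg_left hgx (sub_nonneg.2 hx1), mul_le_mul_of_nonneg_left hc hx0]
  · simp [show φ x = 1 from h1 hx]
  · simp [show φ x = 0 from h0 hx, hgM x hx]

/-- The functions of absolute value less than `1` on a finite set form a neighbourhood of `0` in
the topology of pointwise convergence. -/
theorem setOf_abs_lt_one_mem_nhds_pointwiseTopology {X : Type u} [TopologicalSpace X]
    {F : Set X} (hF : F.Finite) :
    {f : C(X, ℝ) | ∀ x ∈ F, |f x| < 1} ∈ @nhds _ (pointwiseTopology X) (0 : C(X, ℝ)) := by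
  rw [pointwiseTopology, nhds_induced]
  refine ⟨{f : X → ℝ | ∀ x ∈ F, |f x| < 1}, ?_, fun f hf => hf⟩
  refine (hF.eventually_all).2 fun x _ => ?_
  have hcont : Continuous fun f : X → ℝ => |f x| := (continuous_apply x).abs
  exact hcont.continuousAt.eventually_lt continuousAt_const (by simp)

/-- A sequence of open proper subsets that eventually contain each finite set forms a γ-cover. -/
theorem isGammaCover_range {X : Type u} [TopologicalSpace X] {U : ℕ → Set X}
    (hopen : ∀ n, IsOpen (U n)) (hne : ∀ n, U n ≠ univ)
    (hfin : ∀ F : Set X, F.Finite → {n | ¬ F ⊆ U n}.Finite) : IsGammaCover (range U) := by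
  refine ⟨forall_mem_range.2 hopen, ?_, fun hrange => ?_, fun F hF => ?_⟩
  · refine eq_univ_of_forall fun x => ?_
    obtain ⟨n, hn⟩ := (hfin {x} (finite_singleton x)).infinite_compl.nonempty
    exact ⟨U n, mem_range_self n, by simpa using hn⟩
  · have hpt : ∀ n, ∃ x, x ∉ U n := fun n => (ne_univ_iff_exists_notMem _).1 (hne n)
    have : Nonempty X := (hpt 0).nonempty
    have hpt' : ∀ V ∈ range U, ∃ x, x ∉ V := forall_mem_range.2 hpt
    choose! p hp using hpt'
    refine infinite_univ ((hfin (p '' range U) (hrange.image p)).subset fun n _ hsub => ?_)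
    exact hp (U n) (mem_range_self n) (hsub (mem_image_of_mem p (mem_range_self n)))
  · refine ((hfin F hF).image U).subset ?_
    rintro _ ⟨⟨n, rfl⟩, hn⟩
    exact mem_image_of_mem U hn

theorem statement19 (X : Type u) [TopologicalSpace X] [T35Space X]
    (hiw : CountableIWeight X)
    (h : S1sel {D : Set C(X, ℝ) | Dense D} {A : Set C(X, ℝ) | GammaPZero X A}) :
    S1sel {𝒰 : Set (Set X) | IsKCover 𝒰} {𝒰 : Set (Set X) | IsGammaCover 𝒰} := by
  intro 𝒰 h𝒰
  obtain ⟨f, hf, -, -, hconv⟩ := h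
    (fun n => {f | (∃ M, ∀ x, f x ≤ M) ∧ ∃ U ∈ 𝒰 n, ∀ x ∉ U, f x = (n : ℝ) + 1})
    fun n => (h𝒰 n).dense_bounded_eqOn_compl _
  choose hbdd U hU hfU using hf
  have hne : ∀ n, U n ≠ univ := fun n hn => (h𝒰 n).2.2.1 (hn ▸ hU n)
  refine ⟨U, hU, isGammaCover_range (fun n => (h𝒰 n).1 _ (hU n)) hne fun F hF => ?_⟩
  have hfiber : ∀ g : C(X, ℝ), {n | f n = g}.Finite := by
    intro g
    rcases eq_empty_or_nonempty {n | f n = g} with hempty | ⟨m, rfl⟩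
    · exact hempty ▸ finite_empty
    obtain ⟨M, hM⟩ := hbdd m
    obtain ⟨k, hk⟩ := exists_nat_gt M
    refine (finite_Iio k).subset fun n hn => ?_
    obtain ⟨x, hx⟩ := (ne_univ_iff_exists_notMem _).1 (hne n)
    have hle : (n : ℝ) + 1 ≤ M := by
      rw [← hfU n x hx, show f n = f m from hn]
      exact hM x
    exact mem_Iio.2 (by exact_mod_cast (by linarith : (n : ℝ) < k))
  refine ((hconv _ (setOf_abs_lt_one_mem_nhds_pointwiseTopology hF)).preimage'
    fun g _ => hfiber g).subset fun n hn => ⟨mem_range_self n, fun hlt => ?_⟩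
  obtain ⟨x, hxF, hxU⟩ := not_subset.1 hn
  have hlt' := (abs_lt.1 (hlt x hxF)).2
  rw [hfU n x hxU] at hlt'
  linarith [(n.cast_nonneg : (0 : ℝ) ≤ n)]
end
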